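/- (Theorems 5.2–5.3, verification of the reconstructed Jost solution.) With the matrix triplet data as in the context, assume Γ(x) and Γ̄(x) are invertible for every x ∈ ℝ, and that the scalar function g₁ − g₂ is Lebesgue integrable on [x, ∞) for every x ∈ ℝ, where g₁(z) := C̄·e^{−iĀz}·Γ̄(z)^{−1}·e^{−iĀz}·M̄·A·e^{2iAz}·B and g₂(z) := C·e^{iAz}·Γ(z)^{−1}·e^{iAz}·M·Ā·e^{−2iĀz}·B̄. Set G(x) := ∫_x^∞ (g₁(z) − g₂(z)) dz, and define the reflectionless potentials q(x) := 2·C̄·e^{−iĀx}·Γ̄(x)^{−1}·e^{−iĀx}·B̄·e^{−4G(x)} and r(x) := 2·C·e^{iAx}·Γ(x)^{−1}·e^{iAx}·B·e^{4G(x)}. Let ζ ∈ ℂ be such that λ := ζ² is not an eigenvalue of Ā, and define g₃(ζ, x) := i·C̄·e^{−iĀx}·Γ̄(x)^{−1}·e^{−iĀx}·(Ā − λI)^{−1}·B̄, g₄(ζ, x) := 1 − i·C·e^{iAx}·Γ(x)^{−1}·e^{iAx}·M·Ā·e^{−2iĀx}·(Ā − λI)^{−1}·B̄, ψ₁(ζ,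 x) := ζ·e^{iλx}·g₃(ζ, x)·e^{−2G(x)}, and ψ₂(ζ, x) := e^{iλx}·g₄(ζ, x)·e^{2G(x)}. Then for every x ∈ ℝ the pair (ψ₁(ζ,·), ψ₂(ζ,·)) is a solution of system (1.1) with potentials q, r and spectral parameter ζ: ∂ψ₁/∂x = −iζ²·ψ₁ + ζ·q(x)·ψ₂ and ∂ψ₂/∂x = ζ·r(x)·ψ₁ + iζ²·ψ₂. -/

import Mathlib

open MeasureTheory Matrix

/-- e^{iAt} for a complex square matrix A and real t. -/
noncomputable def eiA {n : ℕ} (A : Matrix (Fin n) (Fin n) ℂ) (t : ℝ) :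
    Matrix (Fin n) (Fin n) ℂ :=
  NormedSpace.exp ((Complex.I * t) • A)

section JostDecay

attribute [local instance] Matrix.linftyOpNormedRing Matrix.linftyOpNormedAlgebra

theorem exp_mulVec_eig {n : ℕ} (K : Matrix (Fin n) (Fin n) ℂ) (v : Fin n → ℂ) (μ : ℂ)
    (h : K *ᵥ v = μ • v) : NormedSpace.exp K *ᵥ v = Complex.exp μ • v := by
  have h1 := NormedSpace.exp_series_hasSum_exp' (𝕂 := ℂ) K
  have h2 := NormedSpace.exp_series_hasSum_exp' (𝕂 := ℂ) μ
  have hp : ∀ k : ℕ, K ^ k *ᵥ v = μ ^ k • v := by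
    intro k
    induction k with
    | zero => simp
    | succ k ih => rw [pow_succ, ← mulVec_mulVec, h, mulVec_smul, ih, smul_smul, pow_succ, mul_comm]
  have c : Continuous (fun X : Matrix (Fin n) (Fin n) ℂ => X *ᵥ v) := by fun_prop
  have h3 := h1.map (⟨⟨fun X : Matrix (Fin n) (Fin n) ℂ => X *ᵥ v, by simp⟩, by intro a b; simp [add_mulVec]⟩ : Matrix (Fin n) (Fin n) ℂ →+ (Fin n → ℂ)) c
  have h4 := h2.smul_const v
  rw [← Complex.exp_eq_exp_ℂ] at h4
  refine h3.unique ?_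
  convert h4 using 2 with k
  simp [hp, smul_mulVec, smul_smul]

theorem spec_exp {n : ℕ} (K : Matrix (Fin n) (Fin n) ℂ) (ν : ℂ)
    (h : ν ∈ spectrum ℂ (NormedSpace.exp K)) : ∃ μ ∈ spectrum ℂ K, ν = Complex.exp μ := by
  set f : Module.End ℂ (Fin n → ℂ) := Matrix.toLin' K with hf
  set g : Module.End ℂ (Fin n → ℂ) := Matrix.toLin' (NormedSpace.exp K) with hg
  have hν : g.HasEigenvalue ν := by
    rw [Module.End.hasEigenvalue_iff_mem_spectrum, hg, spectrum_toLin']; exact h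
  have hc : Commute g f := by
    have : Commute (NormedSpace.exp K) K := (Commute.refl K).exp_left
    show g * f = f * g
    rw [hf, hg]
    simp only [Module.End.mul_eq_comp]
    rw [← toLin'_mul, ← toLin'_mul, this.eq]
  have hm : Set.MapsTo f (g.eigenspace ν) (g.eigenspace ν) :=
    Module.End.mapsTo_genEigenspace_of_comm hc ν 1
  have : Nontrivial (g.eigenspace ν) := Submodule.nontrivial_iff_ne_bot.2 hν
  obtain ⟨μ, hμ⟩ := Module.End.exists_eigenvalue (f.restrict hm)
  obtain ⟨w, hw⟩ := hμ.exists_hasEigenvector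
  have e1 := hw.apply_eq_smul
  have hne : (w : Fin n → ℂ) ≠ 0 := by
    intro h; exact hw.2 (Subtype.ext h)
  have e2 : K *ᵥ (w : Fin n → ℂ) = μ • (w : Fin n → ℂ) := by
    have := congrArg Subtype.val e1
    simpa [hf] using this
  refine ⟨μ, ?_, ?_⟩
  · rw [← spectrum_toLin', ← Module.End.hasEigenvalue_iff_mem_spectrum]
    refine Module.End.hasEigenvalue_of_hasEigenvector (x := (w : Fin n → ℂ)) ⟨?_, hne⟩
    rw [Module.End.mem_eigenspace_iff]; simpa using e2
  · have e3 := exp_mulVec_eig K w μ e2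
    have e4 := Module.End.mem_eigenspace_iff.1 w.2
    change NormedSpace.exp K *ᵥ _ = _ at e4
    rw [e3] at e4
    exact (smul_left_injective ℂ hne e4).symm

theorem decay {n : ℕ} (K : Matrix (Fin n) (Fin n) ℂ) (h : ∀ μ ∈ spectrum ℂ K, μ.re < 0) :
    ∃ b > (0:ℝ), ∃ c : ℝ, ∀ t : ℝ, 0 ≤ t → ‖NormedSpace.exp ((t:ℂ) • K)‖ ≤ c * Real.exp (-b * t) := by
  rcases n with _ | n
  · refine ⟨1, one_pos, 0, fun t _ => ?_⟩
    rw [Subsingleton.elim (NormedSpace.exp ((t:ℂ) • K)) 0]; simp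
  set T := NormedSpace.exp K with hT
  have hr : spectralRadius ℂ T < ((1 : NNReal) : ENNReal) := by
    refine spectrum.spectralRadius_lt_of_forall_lt T ?_
    intro k hk
    obtain ⟨μ, hμ, rfl⟩ := spec_exp K k hk
    rw [← NNReal.coe_lt_coe, coe_nnnorm, Complex.norm_exp]
    simpa using h μ hμ
  obtain ⟨ρ, h1, h2⟩ := ENNReal.lt_iff_exists_nnreal_btwn.1 hr
  have h2' : (ρ:ℝ) < 1 := by exact_mod_cast h2
  have hρ0 : (0:ℝ) < ρ := by
    have : (0 : ENNReal) < ρ := lt_of_le_of_lt zero_le h1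
    exact_mod_cast this
  have hev := (spectrum.pow_nnnorm_pow_one_div_tendsto_nhds_spectralRadius T).eventually_lt_const h1
  obtain ⟨N, hN⟩ := Filter.eventually_atTop.1 (hev.and (Filter.eventually_ge_atTop 1))
  have hpow : ∀ k ≥ N, ‖T ^ k‖ ≤ (ρ:ℝ) ^ k := by
    intro k hk
    obtain ⟨ha, hb⟩ := hN k hk
    have := ENNReal.rpow_le_rpow ha.le (z := (k:ℝ)) (by positivity)
    rw [← ENNReal.rpow_mul, one_div, inv_mul_cancel₀ (by positivity), ENNReal.rpow_one, ENNReal.rpow_natCast] at this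
    exact_mod_cast this
  obtain ⟨c1, hc1⟩ : ∃ c1 : ℝ, ∀ k, ‖T ^ k‖ ≤ c1 * (ρ:ℝ) ^ k := by
    obtain ⟨c, hc⟩ := (Finset.image (fun k => ‖T ^ k‖ / (ρ:ℝ)^k) (Finset.range N)).bddAbove
    refine ⟨max c 1, fun k => ?_⟩
    rcases lt_or_ge k N with hk | hk
    · have := hc (Finset.mem_coe.2 (Finset.mem_image_of_mem _ (Finset.mem_range.2 hk)))
      rw [← div_le_iff₀ (by positivity)]
      exact this.trans (le_max_left _ _)
    · refine (hpow k hk).trans ?_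
      have : (0:ℝ) < ρ ^ k := by positivity
      nlinarith [le_max_right c 1]
  have hcont : Continuous (fun t : ℝ => NormedSpace.exp ((t:ℂ) • K)) := by
    have : Continuous (NormedSpace.exp : Matrix (Fin (n+1)) (Fin (n+1)) ℂ → _) := NormedSpace.exp_continuous
    exact this.comp (by fun_prop)
  obtain ⟨c2, hc2⟩ := (isCompact_Icc (a := (0:ℝ)) (b := 1)).exists_bound_of_continuousOn hcont.continuousOn
  have hc1' : 0 ≤ c1 := by
    have := (norm_nonneg _).trans (hc1 0); simpa using this
  refine ⟨-Real.log ρ, by have := Real.log_neg hρ0 h2'; linarith, c1 * c2 * (ρ:ℝ)⁻¹, fun t ht => ?_⟩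
  have e : NormedSpace.exp ((t:ℂ) • K) = T ^ ⌊t⌋₊ * NormedSpace.exp (((t - ⌊t⌋₊ : ℝ):ℂ) • K) := by
    rw [hT, ← Matrix.exp_nsmul, ← Matrix.exp_add_of_commute]
    · congr 1
      rw [← Nat.cast_smul_eq_nsmul ℂ, ← add_smul]; congr 1; push_cast; ring
    · rw [← Nat.cast_smul_eq_nsmul ℂ]
      exact ((Commute.refl K).smul_left _).smul_right _
  have hfl : t - ⌊t⌋₊ ∈ Set.Icc (0:ℝ) 1 :=
    ⟨by linarith [Nat.floor_le ht], by linarith [Nat.lt_floor_add_one t]⟩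
  have hc2' : 0 ≤ c2 := (norm_nonneg _).trans (hc2 _ hfl)
  have e5 : (ρ:ℝ) ^ ⌊t⌋₊ ≤ (ρ:ℝ)⁻¹ * Real.exp (- -Real.log ρ * t) := by
    rw [neg_neg, ← Real.rpow_def_of_pos hρ0, ← Real.rpow_natCast, ← Real.rpow_neg_one, ← Real.rpow_add hρ0]
    apply Real.rpow_le_rpow_of_exponent_ge hρ0 h2'.le
    linarith [Nat.lt_floor_add_one t]
  rw [e]
  calc _ ≤ ‖T ^ ⌊t⌋₊‖ * ‖NormedSpace.exp (((t - ⌊t⌋₊ : ℝ):ℂ) • K)‖ := norm_mul_le _ _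
    _ ≤ (c1 * (ρ:ℝ) ^ ⌊t⌋₊) * c2 := by
        gcongr
        · exact hc1 _
        · exact hc2 _ hfl
    _ ≤ (c1 * ((ρ:ℝ)⁻¹ * Real.exp (- -Real.log ρ * t))) * c2 := by gcongr
    _ = _ := by ring

theorem decay_entry {n : ℕ} (K : Matrix (Fin n) (Fin n) ℂ) (h : ∀ μ ∈ spectrum ℂ K, μ.re < 0) :
    ∃ b > (0:ℝ), ∃ c : ℝ, ∀ t : ℝ, 0 ≤ t → ∀ i j,
      ‖NormedSpace.exp ((t:ℂ) • K) i j‖ ≤ c * Real.exp (-b * t) := by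
  obtain ⟨b, hb, c, hc⟩ := decay K h
  refine ⟨b, hb, c, fun t ht i j => le_trans ?_ (hc t ht)⟩
  rw [Matrix.linfty_opNorm_def]
  generalize NormedSpace.exp ((t:ℂ) • K) = X
  have h1 : ‖X i j‖₊ ≤ ∑ j, ‖X i j‖₊ :=
    Finset.single_le_sum (f := fun j => ‖X i j‖₊) (fun _ _ => zero_le) (Finset.mem_univ j)
  have h2 : (∑ j, ‖X i j‖₊) ≤ Finset.univ.sup fun i => ∑ j, ‖X i j‖₊ :=
    Finset.le_sup (f := fun i => ∑ j, ‖X i j‖₊) (Finset.mem_univ i)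
  exact_mod_cast h1.trans h2

/-- Entrywise derivative of a matrix-valued function. -/
def MD {m n : ℕ} (X : ℝ → Matrix (Fin m) (Fin n) ℂ) (X' : Matrix (Fin m) (Fin n) ℂ) (x : ℝ) : Prop :=
  ∀ i j, HasDerivAt (fun t => X t i j) (X' i j) x

theorem MD_const {m n : ℕ} (X : Matrix (Fin m) (Fin n) ℂ) (x : ℝ) : MD (fun _ => X) 0 x :=
  fun i j => by simpa using hasDerivAt_const x (X i j)

theorem MD.mul {m n k : ℕ} {X : ℝ → Matrix (Fin m) (Fin n) ℂ} {Y : ℝ → Matrix (Fin n) (Fin k) ℂ}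
    {X' Y' x} (hX : MD X X' x) (hY : MD Y Y' x) :
    MD (fun t => X t * Y t) (X' * Y x + X x * Y') x := by
  intro i j
  simp only [Matrix.mul_apply, Matrix.add_apply, ← Finset.sum_add_distrib]
  exact HasDerivAt.fun_sum fun l _ => (hX i l).mul (hY l j)

theorem MD.const_mul {m n k : ℕ} {Y : ℝ → Matrix (Fin n) (Fin k) ℂ} {Y' x} 
    (X : Matrix (Fin m) (Fin n) ℂ) (hY : MD Y Y' x) : MD (fun t => X * Y t) (X * Y') x := by
  simpa using (MD_const X x).mul hY

theorem MD.mul_const {m n k : ℕ} {X : ℝ → Matrix (Fin m) (Fin n) ℂ} {X' x} 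
    (hX : MD X X' x) (Y : Matrix (Fin n) (Fin k) ℂ) : MD (fun t => X t * Y) (X' * Y) x := by
  simpa using hX.mul (MD_const Y x)

theorem MD.sub {m n : ℕ} {X Y : ℝ → Matrix (Fin m) (Fin n) ℂ} {X' Y' x} 
    (hX : MD X X' x) (hY : MD Y Y' x) : MD (fun t => X t - Y t) (X' - Y') x :=
  fun i j => (hX i j).sub (hY i j)

theorem MD_iff {n : ℕ} {X : ℝ → Matrix (Fin n) (Fin n) ℂ} {X' x} :
    MD X X' x ↔ HasDerivAt X X' x := by
  constructor
  · intro h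
    have : HasDerivAt (F := Fin n → Fin n → ℂ) X X' x :=
      hasDerivAt_pi.2 fun i => hasDerivAt_pi.2 fun j => h i j
    exact this
  · intro h i j
    have h' : HasDerivAt (F := Fin n → Fin n → ℂ) X X' x := h
    exact hasDerivAt_pi.1 (hasDerivAt_pi.1 h' i) j

theorem MD_exp {n : ℕ} (K : Matrix (Fin n) (Fin n) ℂ) (x : ℝ) :
    MD (fun t : ℝ => NormedSpace.exp ((t:ℂ) • K)) (K * NormedSpace.exp ((x:ℂ) • K)) x := by
  rw [MD_iff]
  have h := hasDerivAt_exp_smul_const' (𝕂 := ℝ) K x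
  simp only [Complex.coe_smul]
  exact h

theorem MD.inv {n : ℕ} {W P : ℝ → Matrix (Fin n) (Fin n) ℂ} {W' x}
    (h : MD W W' x) (h1 : ∀ t, W t * P t = 1) : MD P (-(P x * W' * P x)) x := by
  rw [MD_iff] at h ⊢
  have h2 : ∀ t, P t * W t = 1 := fun t => mul_eq_one_comm.1 (h1 t)
  let u : ℝ → (Matrix (Fin n) (Fin n) ℂ)ˣ := fun t => ⟨W t, P t, h1 t, h2 t⟩
  have h3 := hasFDerivAt_ringInverse (𝕜 := ℝ) (u x)
  have h4 := h3.comp_hasDerivAt x (f := W) h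
  have e : (Ring.inverse ∘ W) = P := by
    funext t
    exact Ring.inverse_unit (u t)
  rw [e] at h4
  have e2 : -(P x * W' * P x) = (-((ContinuousLinearMap.mulLeftRight ℝ (Matrix (Fin n) (Fin n) ℂ)) ↑(u x)⁻¹) ↑(u x)⁻¹) W' := by
    simp [u]
  rw [e2]
  exact h4

theorem MD.continuous {m n : ℕ} {X X' : ℝ → Matrix (Fin m) (Fin n) ℂ} (h : ∀ x, MD X (X' x) x) (i j) :
    Continuous fun t => X t i j :=
  continuous_iff_continuousAt.2 fun x => (h x i j).continuousAt

theorem sylvester {m n : ℕ} (K : Matrix (Fin m) (Fin m) ℂ) (h : ∀ μ ∈ spectrum ℂ K, μ.re < 0)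
    (L : Matrix (Fin n) (Fin n) ℂ) (h' : ∀ μ ∈ spectrum ℂ L, μ.re < 0)
    (D X : Matrix (Fin m) (Fin n) ℂ)
    (hX : ∀ i j, X i j = ∫ z in Set.Ioi (0:ℝ),
      (NormedSpace.exp ((z:ℂ) • K) * D * NormedSpace.exp ((z:ℂ) • L)) i j) :
    K * X + X * L = - D := by
  set f : ℝ → Matrix (Fin m) (Fin n) ℂ := fun z => 
    NormedSpace.exp ((z:ℂ) • K) * D * NormedSpace.exp ((z:ℂ) • L) with hf
  have hd : ∀ x, MD f (K * f x + f x * L) x := by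
    intro x
    have := ((MD_exp K x).mul_const D).mul (MD_exp L x)
    have hc : L * NormedSpace.exp ((x:ℂ) • L) = NormedSpace.exp ((x:ℂ) • L) * L :=
      (((Commute.refl L).smul_right _).exp_right).eq
    rw [hc] at this
    simpa only [hf, Matrix.mul_assoc] using this
  have hcont : ∀ i j, Continuous fun t => f t i j := MD.continuous hd
  have hfint : ∀ i j, IntegrableOn (fun t => f t i j) (Set.Ioi 0) := by
    intro i j
    obtain ⟨b, hb, c, hc⟩ := decay_entry K h
    obtain ⟨b', hb', c', hc'⟩ := decay_entry L h'
    have : IntegrableOn (fun t => ‖f t i j‖) (Set.Ioi 0) := by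
      refine integrable_of_isBigO_exp_neg (b := b + b') (by positivity) (hcont i j).norm.continuousOn ?_
      refine Asymptotics.IsBigO.of_bound (∑ l, (∑ k, c * ‖D k l‖) * c') ?_
      filter_upwards [Filter.eventually_ge_atTop 0] with t ht
      rw [norm_norm, hf, Real.norm_of_nonneg (Real.exp_pos _).le]
      simp only [Matrix.mul_apply]
      refine (norm_sum_le _ _).trans ?_
      rw [Finset.sum_mul]
      refine Finset.sum_le_sum fun l _ => ?_
      rw [norm_mul]
      have e1 : ‖∑ k, NormedSpace.exp ((t:ℂ) • K) i k * D k l‖ ≤ (∑ k, c * ‖D k l‖) * Real.exp (-b * t) := by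
        refine (norm_sum_le _ _).trans ?_
        rw [Finset.sum_mul]
        refine Finset.sum_le_sum fun k _ => ?_
        rw [norm_mul]
        calc _ ≤ (c * Real.exp (-b * t)) * ‖D k l‖ := by gcongr; exact hc t ht i k
          _ = _ := by ring
      calc _ ≤ ((∑ k, c * ‖D k l‖) * Real.exp (-b * t)) * (c' * Real.exp (-b' * t)) :=
            mul_le_mul e1 (hc' t ht l j) (norm_nonneg _) ((norm_nonneg _).trans e1)
        _ = _ := by
          rw [show -(b + b') * t = -b * t + -b' * t by ring, Real.exp_add]; ring
    exact (integrable_norm_iff (hcont i j).aestronglyMeasurable).1 this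
  ext i j
  have hfint1 : ∀ i j, IntegrableOn (fun t => (K * f t) i j) (Set.Ioi 0) := by
    intro i j
    simp only [Matrix.mul_apply]
    exact integrable_finsetSum _ fun l _ => (hfint l j).const_mul _
  have hfint2 : ∀ i j, IntegrableOn (fun t => (f t * L) i j) (Set.Ioi 0) := by
    intro i j
    simp only [Matrix.mul_apply]
    exact integrable_finsetSum _ fun l _ => (hfint i l).mul_const _
  have hfint' : IntegrableOn (fun t => (K * f t + f t * L) i j) (Set.Ioi 0) :=
    (hfint1 i j).add (hfint2 i j)
  have hlim := tendsto_zero_of_hasDerivAt_of_integrableOn_Ioi (fun x _ => hd x i j) hfint' (hfint i j)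
  have hI := integral_Ioi_of_hasDerivAt_of_tendsto' (fun x _ => hd x i j) hfint' hlim
  have h0 : f 0 = D := by simp [hf]
  rw [h0] at hI
  have e1 : ∫ t in Set.Ioi (0:ℝ), (K * f t) i j = (K * X) i j := by
    simp only [Matrix.mul_apply]
    rw [integral_finsetSum _ fun l _ => (hfint l j).const_mul _]
    refine Finset.sum_congr rfl fun l _ => ?_
    rw [integral_const_mul, hX]
  have e2 : ∫ t in Set.Ioi (0:ℝ), (f t * L) i j = (X * L) i j := by
    simp only [Matrix.mul_apply]
    rw [integral_finsetSum _ fun l _ => (hfint i l).mul_const _]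
    refine Finset.sum_congr rfl fun l _ => ?_
    rw [integral_mul_const, hX]
  have e3 : ∫ t in Set.Ioi (0:ℝ), (K * f t + f t * L) i j = (K * X) i j + (X * L) i j := by
    rw [← e1, ← e2]
    exact integral_add (hfint1 i j) (hfint2 i j)
  rw [e3] at hI
  simpa using hI

end JostDecay

section JostAlg

theorem rz {k l m n : ℕ} {X : Matrix (Fin k) (Fin l) ℂ} {Y : Matrix (Fin l) (Fin m) ℂ}
    {Z : Matrix (Fin k) (Fin m) ℂ} (h : X * Y = Z) (T : Matrix (Fin m) (Fin n) ℂ) :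
    X * (Y * T) = Z * T := by
  rw [← Matrix.mul_assoc, h]

/-- push-through identity -/
theorem push_through {n m : ℕ} {A E K P : Matrix (Fin n) (Fin n) ℂ}
    {Ab F D Q : Matrix (Fin m) (Fin m) ℂ} {M : Matrix (Fin n) (Fin m) ℂ}
    {Mb : Matrix (Fin m) (Fin n) ℂ} {B : Matrix (Fin n) (Fin 1) ℂ} {Cb : Matrix (Fin 1) (Fin m) ℂ}
    {s : ℂ} (hM : A * M = M * Ab + s • (B * Cb))
    (hEK : E * K = A) (hDF : D * F = Ab)
    (hP : P * E = 1 + P * M * D * Mb) (hQ : F * Q = 1 + Mb * K * M * Q) :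
    K * M * Q = P * M * D + s • (P * B * Cb * Q) := by
  have e1 : P * E * (K * M * Q) = P * (E * K) * M * Q := by simp only [Matrix.mul_assoc]
  have e2 : P * M * D * (F * Q) = P * M * (D * F) * Q := by simp only [Matrix.mul_assoc]
  have e3 : P * (A * M) * Q = P * A * M * Q := by simp only [Matrix.mul_assoc]
  rw [hP, hEK] at e1
  rw [hQ, hDF] at e2
  rw [hM] at e3
  simp only [Matrix.mul_assoc, Matrix.mul_add, Matrix.add_mul, Matrix.mul_smul, Matrix.smul_mul,
    Matrix.mul_one, Matrix.one_mul] at e1 e2 e3 ⊢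
  linear_combination (norm := module) e1 - e2 - e3

theorem mul00 (X Y : Matrix (Fin 1) (Fin 1) ℂ) : (X * Y) 0 0 = X 0 0 * Y 0 0 := by
  simp [Matrix.mul_apply]

theorem mul00' {n m : ℕ} (X : Matrix (Fin 1) (Fin n) ℂ) (Y : Matrix (Fin n) (Fin 1) ℂ)
    (Z : Matrix (Fin 1) (Fin m) ℂ) (T : Matrix (Fin m) (Fin 1) ℂ) :
    (X * (Y * (Z * T))) 0 0 = (X * Y) 0 0 * (Z * T) 0 0 := by
  rw [← Matrix.mul_assoc, mul00]

variable {n m : ℕ} {A E K P : Matrix (Fin n) (Fin n) ℂ}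
    {Ab F D Q R : Matrix (Fin m) (Fin m) ℂ} {M : Matrix (Fin n) (Fin m) ℂ}
    {Mb : Matrix (Fin m) (Fin n) ℂ} {B : Matrix (Fin n) (Fin 1) ℂ} {Cb : Matrix (Fin 1) (Fin m) ℂ}
    {C : Matrix (Fin 1) (Fin n) ℂ} {Bb : Matrix (Fin m) (Fin 1) ℂ}

theorem trace_id
    (hM : A * M = M * Ab + Complex.I • (B * Cb)) (hMb : Ab * Mb = Mb * A + (-Complex.I) • (Bb * C))
    (hKA : A * K = K * A) (hFA : F * Ab = Ab * F)
    (hQ : F * Q = 1 + Mb * K * M * Q) (hQ' : Q * F = 1 + Q * Mb * K * M) :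
    (C * K * M * Q * Bb) 0 0 = (Cb * Q * Mb * K * B) 0 0 := by
  rw [← Matrix.trace_fin_one (C * K * M * Q * Bb), ← Matrix.trace_fin_one (Cb * Q * Mb * K * B)]
  have h1 : (C * K * M * Q * Bb).trace = (K * M * Q * (Bb * C)).trace := by
    rw [show C * K * M * Q * Bb = C * (K * M * Q * Bb) by simp only [Matrix.mul_assoc],
      Matrix.trace_mul_comm]
    simp only [Matrix.mul_assoc]
  have h2 : (Cb * Q * Mb * K * B).trace = (Q * Mb * K * (B * Cb)).trace := by
    rw [show Cb * Q * Mb * K * B = Cb * (Q * Mb * K * B) by simp only [Matrix.mul_assoc],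
      Matrix.trace_mul_comm]
    simp only [Matrix.mul_assoc]
  have h3 : Complex.I * (K * M * Q * (Bb * C)).trace
      = (K * M * Q * (Mb * A)).trace - (K * M * Q * (Ab * Mb)).trace := by
    rw [hMb, Matrix.mul_add, Matrix.trace_add, Matrix.mul_smul, Matrix.trace_smul, smul_eq_mul]
    ring
  have h4 : Complex.I * (Q * Mb * K * (B * Cb)).trace
      = (Q * Mb * K * (A * M)).trace - (Q * Mb * K * (M * Ab)).trace := by
    rw [hM, Matrix.mul_add, Matrix.trace_add, Matrix.mul_smul, Matrix.trace_smul, smul_eq_mul]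
    ring
  have h5 : (K * M * Q * (Mb * A)).trace = (Q * Mb * K * (A * M)).trace := by
    rw [show K * M * Q * (Mb * A) = (K * M) * (Q * Mb * A) by simp only [Matrix.mul_assoc],
      Matrix.trace_mul_comm]
    rw [show Q * Mb * A * (K * M) = Q * Mb * (A * K) * M by simp only [Matrix.mul_assoc], hKA]
    simp only [Matrix.mul_assoc]
  have h6 : (K * M * Q * (Ab * Mb)).trace = (Q * F * Ab).trace - Ab.trace := by
    rw [show K * M * Q * (Ab * Mb) = (K * M * Q * Ab) * Mb by simp only [Matrix.mul_assoc],
      Matrix.trace_mul_comm,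
      show Mb * (K * M * Q * Ab) = (Mb * K * M * Q) * Ab by simp only [Matrix.mul_assoc],
      show Mb * K * M * Q = F * Q - 1 by rw [hQ]; abel, Matrix.sub_mul, Matrix.trace_sub,
      Matrix.one_mul, Matrix.trace_mul_comm, ← Matrix.mul_assoc, ← hFA, Matrix.trace_mul_comm,
      ← Matrix.mul_assoc]
  have h7 : (Q * Mb * K * (M * Ab)).trace = (Q * F * Ab).trace - Ab.trace := by
    rw [show Q * Mb * K * (M * Ab) = (Q * Mb * K * M) * Ab by simp only [Matrix.mul_assoc],
      show Q * Mb * K * M = Q * F - 1 by rw [hQ']; abel, Matrix.sub_mul, Matrix.trace_sub,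
      Matrix.one_mul]
  rw [h1, h2]
  apply mul_left_cancel₀ Complex.I_ne_zero
  rw [h3, h4, h5, h6, h7]

theorem gdiff
    (hM : A * M = M * Ab + Complex.I • (B * Cb)) (hMb : Ab * Mb = Mb * A + (-Complex.I) • (Bb * C))
    (hEK : E * K = A) (hDF : D * F = Ab)
    (hP : P * E = 1 + P * M * D * Mb)
    (hKA : A * K = K * A) (hFA : F * Ab = Ab * F)
    (hQ : F * Q = 1 + Mb * K * M * Q) (hQ' : Q * F = 1 + Q * Mb * K * M) :
    (Cb * Q * Mb * K * B) 0 0 - (C * P * M * D * Bb) 0 0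
      = Complex.I * (C * P * B) 0 0 * (Cb * Q * Bb) 0 0 := by
  rw [← trace_id hM hMb hKA hFA hQ hQ']
  have h := push_through hM hEK hDF hP hQ
  have e : C * K * M * Q * Bb = C * (K * M * Q) * Bb := by simp only [Matrix.mul_assoc]
  rw [e, h]
  have e2 : C * (P * M * D + Complex.I • (P * B * Cb * Q)) * Bb
    = C * P * M * D * Bb + Complex.I • ((C * P * B) * (Cb * Q * Bb)) := by
    simp only [Matrix.mul_assoc, Matrix.mul_add, Matrix.add_mul, Matrix.mul_smul, Matrix.smul_mul]
  rw [e2, Matrix.add_apply, Matrix.smul_apply, mul00, smul_eq_mul]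
  ring

theorem Xderiv {lam : ℂ}
    (hM : A * M = M * Ab + Complex.I • (B * Cb)) (hMb : Ab * Mb = Mb * A + (-Complex.I) • (Bb * C))
    (hEK : E * K = A) (hDF : D * F = Ab)
    (hP : P * E = 1 + P * M * D * Mb)
    (hKA : A * K = K * A) (hFA : F * Ab = Ab * F)
    (hQ : F * Q = 1 + Mb * K * M * Q) (hQ' : Q * F = 1 + Q * Mb * K * M)
    (hR : Ab * R = 1 + lam • R) :
    (Cb * (-(Q * ((2 * Complex.I) • (Ab * F) - (2 * Complex.I) • (Mb * A * K * M)) * Q)) * R * Bb) 0 0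
     = -2 * Complex.I * (Cb * Q * Bb) 0 0 - 2 * Complex.I * lam * (Cb * Q * R * Bb) 0 0
       - 2 * (Cb * Q * Bb) 0 0 * (C * P * M * D * R * Bb) 0 0
       - 2 * Complex.I * (Cb * Q * Bb) 0 0 * (C * P * B) 0 0 * (Cb * Q * R * Bb) 0 0 := by
  have hL := push_through hM hEK hDF hP hQ
  have a1 : Q * Ab * (F * Q) = Q * Ab * F * Q := by simp only [Matrix.mul_assoc]
  rw [hQ] at a1
  have a2 : Q * (Ab * Mb) * K * M * Q = Q * Ab * Mb * K * M * Q := by simp only [Matrix.mul_assoc]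
  rw [hMb] at a2
  have a3 : Q * Bb * C * (K * M * Q) = Q * Bb * C * K * M * Q := by simp only [Matrix.mul_assoc]
  rw [hL] at a3
  have e : -(Q * ((2 * Complex.I) • (Ab * F) - (2 * Complex.I) • (Mb * A * K * M)) * Q)
      = (-2 * Complex.I) • (Q * Ab) - (2:ℂ) • (Q * Bb * C * P * M * D)
        - (2 * Complex.I) • (Q * Bb * C * P * B * Cb * Q) := by
    simp only [Matrix.mul_assoc, Matrix.mul_add, Matrix.add_mul, Matrix.mul_sub, Matrix.sub_mul,
      Matrix.mul_smul, Matrix.smul_mul,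
      Matrix.mul_one, Matrix.one_mul] at a1 a2 a3 ⊢
    have hI : Complex.I * Complex.I = -1 := Complex.I_mul_I
    have a3' := congrArg (fun T => (2 * (Complex.I * Complex.I)) • T) a3
    simp only [smul_add, smul_smul] at a3'
    rw [show 2 * (Complex.I * Complex.I) * Complex.I = -2 * Complex.I by rw [hI]; ring, hI] at a3'
    have a2' := congrArg (fun T => (2 * Complex.I) • T) a2
    simp only [smul_add, smul_smul] at a2'
    rw [show 2 * Complex.I * -Complex.I = 2 by linear_combination -2 * hI] at a2'
    linear_combination (norm := module) (2 * Complex.I) • a1 + a2' - a3'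
  rw [e]
  have e2 : Cb * ((-2 * Complex.I) • (Q * Ab) - (2:ℂ) • (Q * Bb * C * P * M * D)
        - (2 * Complex.I) • (Q * Bb * C * P * B * Cb * Q)) * R * Bb
      = (-2 * Complex.I) • (Cb * Q * (Ab * R) * Bb) - (2:ℂ) • ((Cb * Q * Bb) * (C * P * M * D * R * Bb))
        - (2 * Complex.I) • ((Cb * Q * Bb) * (C * P * B) * (Cb * Q * R * Bb)) := by
    simp only [Matrix.mul_assoc, Matrix.mul_sub, Matrix.sub_mul, Matrix.mul_smul, Matrix.smul_mul]
  have e3 : Cb * Q * (1 + lam • R) * Bb = Cb * Q * Bb + lam • (Cb * Q * R * Bb) := by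
    simp only [Matrix.mul_add, Matrix.add_mul, Matrix.mul_smul, Matrix.smul_mul, Matrix.mul_one]
  rw [e2, hR, e3]
  simp only [Matrix.sub_apply, Matrix.add_apply, Matrix.smul_apply, mul00, smul_eq_mul]
  ring

theorem Yderiv {lam : ℂ}
    (hM : A * M = M * Ab + Complex.I • (B * Cb)) (hMb : Ab * Mb = Mb * A + (-Complex.I) • (Bb * C))
    (hFD : F * D = Ab) (hKE : K * E = A)
    (hP' : E * P = 1 + M * D * Mb * P)
    (hQ' : Q * F = 1 + Q * Mb * K * M)
    (hR : Ab * R = 1 + lam • R) :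
    (C * (-(P * ((-2 * Complex.I) • (A * E) + (2 * Complex.I) • (M * Ab * D * Mb)) * P) * (M * D)
      + P * (M * ((-2 * Complex.I) • (Ab * D)))) * R * Bb) 0 0
     = -2 * (C * P * B) 0 0 * ((Cb * Q * Bb) 0 0 + lam * (Cb * Q * R * Bb) 0 0
       - Complex.I * (Cb * Q * Bb) 0 0 * (C * P * M * D * R * Bb) 0 0) := by
  have hL := push_through hMb hFD hKE hQ' hP'
  have hI : Complex.I * Complex.I = -1 := Complex.I_mul_I
  have b1 : P * A * (E * P) * M * D = P * A * E * P * M * D := by simp only [Matrix.mul_assoc]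
  rw [hP'] at b1
  have b2 : P * (A * M) * D * Mb * P * M * D = P * A * M * D * Mb * P * M * D := by
    simp only [Matrix.mul_assoc]
  rw [hM] at b2
  have b3 : P * (A * M) * D = P * A * M * D := by simp only [Matrix.mul_assoc]
  rw [hM] at b3
  have b4 : P * B * Cb * (D * Mb * P) * M * D = P * B * Cb * D * Mb * P * M * D := by
    simp only [Matrix.mul_assoc]
  rw [hL] at b4
  have b5 : P * B * Cb * (Q * F) * D = P * B * Cb * Q * (F * D) := by
    simp only [Matrix.mul_assoc]
  rw [hQ', hFD] at b5
  have e : -(P * ((-2 * Complex.I) • (A * E) + (2 * Complex.I) • (M * Ab * D * Mb)) * P) * (M * D)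
      + P * (M * ((-2 * Complex.I) • (Ab * D)))
      = (-2:ℂ) • (P * B * Cb * Q * Ab) + (2 * Complex.I) • (P * B * Cb * Q * Bb * C * P * M * D) := by
    simp only [Matrix.mul_assoc, Matrix.mul_add, Matrix.add_mul, Matrix.mul_sub, Matrix.sub_mul,
      Matrix.mul_smul, Matrix.smul_mul, Matrix.neg_mul,
      Matrix.mul_one, Matrix.one_mul] at b1 b2 b3 b4 b5 ⊢
    have b2' := congrArg (fun T => (2 * Complex.I) • T) b2
    have b3' := congrArg (fun T => (2 * Complex.I) • T) b3
    simp only [smul_add, smul_smul] at b2' b3'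
    rw [show 2 * Complex.I * Complex.I = -2 by linear_combination 2 * hI] at b2' b3'
    linear_combination (norm := module) (-2 * Complex.I) • b1 - b2' - b3' + (2:ℂ) • b4 - (2:ℂ) • b5
  rw [e]
  have e2 : C * ((-2:ℂ) • (P * B * Cb * Q * Ab) + (2 * Complex.I) • (P * B * Cb * Q * Bb * C * P * M * D)) * R * Bb
      = (-2:ℂ) • ((C * P * B) * (Cb * Q * (Ab * R) * Bb))
        + (2 * Complex.I) • ((C * P * B) * (Cb * Q * Bb) * (C * P * M * D * R * Bb)) := by
    simp only [Matrix.mul_assoc, Matrix.mul_add, Matrix.add_mul, Matrix.mul_smul, Matrix.smul_mul]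
  have e3 : Cb * Q * (1 + lam • R) * Bb = Cb * Q * Bb + lam • (Cb * Q * R * Bb) := by
    simp only [Matrix.mul_add, Matrix.add_mul, Matrix.mul_smul, Matrix.smul_mul, Matrix.mul_one]
  rw [e2, hR, e3]
  simp only [Matrix.sub_apply, Matrix.add_apply, Matrix.smul_apply, mul00, smul_eq_mul]
  ring

end JostAlg

section JostMain

theorem eiA_add {n : ℕ} (A : Matrix (Fin n) (Fin n) ℂ) (s t : ℝ) :
    eiA A (s + t) = eiA A s * eiA A t := by
  unfold eiA
  rw [← Matrix.exp_add_of_commute _ _ (((Commute.refl A).smul_left _).smul_right _), ← add_smul]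
  push_cast
  rw [mul_add]

theorem eiA_zero {n : ℕ} (A : Matrix (Fin n) (Fin n) ℂ) : eiA A 0 = 1 := by
  simp [eiA]

theorem eiA_comm {n : ℕ} (A : Matrix (Fin n) (Fin n) ℂ) (t : ℝ) : A * eiA A t = eiA A t * A := by
  let _ := @Matrix.linftyOpNormedRing (Fin n) ℂ
  let _ := @Matrix.linftyOpNormedAlgebra (Fin n) ℂ ℂ
  exact (((Commute.refl A).smul_right _).exp_right).eq

theorem MD_eiA {n : ℕ} (A : Matrix (Fin n) (Fin n) ℂ) (c x : ℝ) :
    MD (fun t => eiA A (c * t)) ((c * Complex.I) • (A * eiA A (c * x))) x := by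
  have h := MD_exp ((c * Complex.I) • A) x
  have e : ∀ t : ℝ, NormedSpace.exp ((t:ℂ) • ((c * Complex.I) • A)) = eiA A (c * t) := by
    intro t
    unfold eiA
    rw [smul_smul]
    congr 2
    push_cast
    ring
  simpa only [e, Matrix.smul_mul] using h

theorem Pinv {n m : ℕ} {e e' Γ : Matrix (Fin n) (Fin n) ℂ} {D : Matrix (Fin m) (Fin m) ℂ}
    {M : Matrix (Fin n) (Fin m) ℂ} {Mb : Matrix (Fin m) (Fin n) ℂ} (he : e' * e = 1)
    (hΓ : Γ = 1 - e * M * D * Mb * e) (hu : IsUnit Γ) :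
    (e' * e' - M * D * Mb) * (e * Γ⁻¹ * e) = 1 := by
  have h1 : (e' * e' - M * D * Mb) * e = e' * Γ := by
    rw [hΓ, Matrix.sub_mul, Matrix.mul_sub, Matrix.mul_assoc, he]
    have : e' * (e * M * D * Mb * e) = (e' * e) * M * D * Mb * e := by
      simp only [Matrix.mul_assoc]
    rw [this, he, Matrix.one_mul]
  have h2 : Γ * Γ⁻¹ = 1 := Matrix.mul_nonsing_inv _ ((Matrix.isUnit_iff_isUnit_det _).1 hu)
  calc _ = ((e' * e' - M * D * Mb) * e) * Γ⁻¹ * e := by simp only [Matrix.mul_assoc]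
    _ = e' * (Γ * Γ⁻¹) * e := by rw [h1]; simp only [Matrix.mul_assoc]
    _ = 1 := by rw [h2, Matrix.mul_one, he]

theorem G_deriv {f G : ℝ → ℂ} (hf : Continuous f) (hi : ∀ x : ℝ, IntegrableOn f (Set.Ici x))
    (hG : ∀ x : ℝ, G x = ∫ z in Set.Ioi x, f z) (x : ℝ) : HasDerivAt G (-f x) x := by
  have hi' : ∀ x : ℝ, IntegrableOn f (Set.Ioi x) := fun x => (hi x).mono_set Set.Ioi_subset_Ici_self
  have e : G = fun t => G x - ∫ z in x..t, f z := by
    funext t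
    rw [← intervalIntegral.integral_Ioi_sub_Ioi' (hi' x) (hi' t), hG x, hG t]
    ring
  have h := (hf.integral_hasStrictDerivAt x x).hasDerivAt
  rw [e]
  simpa using h.const_sub (G x)

theorem spec_I {n : ℕ} (A : Matrix (Fin n) (Fin n) ℂ) (s : ℂ) (hs : s ≠ 0)
    (h : ∀ μ ∈ spectrum ℂ A, (s * μ).re < 0) : ∀ μ ∈ spectrum ℂ (s • A), μ.re < 0 := by
  intro μ hμ
  have e : s • A = (Units.mk0 s hs) • A := rfl
  rw [e, spectrum.unit_smul_eq_smul] at hμ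
  obtain ⟨ν, hν, rfl⟩ := hμ
  exact h ν hν

end JostMain

/-- Theorems 5.2–5.3: the reconstructed Jost solution (ψ₁, ψ₂), built explicitly from
the matrix triplets, solves system (1.1) with the reconstructed reflectionless
potentials q, r. -/
theorem reconstructed_jost_solves
    (𝒩 𝒩b : ℕ)
    (A : Matrix (Fin 𝒩) (Fin 𝒩) ℂ) (hA : ∀ μ ∈ spectrum ℂ A, 0 < μ.im)
    (B : Matrix (Fin 𝒩) (Fin 1) ℂ) (C : Matrix (Fin 1) (Fin 𝒩) ℂ)
    (Ab : Matrix (Fin 𝒩b) (Fin 𝒩b) ℂ) (hAb : ∀ μ ∈ spectrum ℂ Ab, μ.im < 0)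
    (Bb : Matrix (Fin 𝒩b) (Fin 1) ℂ) (Cb : Matrix (Fin 1) (Fin 𝒩b) ℂ)
    (M : Matrix (Fin 𝒩) (Fin 𝒩b) ℂ)
    (hM : ∀ i j, M i j = ∫ z in Set.Ioi (0 : ℝ), (eiA A z * B * Cb * eiA Ab (-z)) i j)
    (Mb : Matrix (Fin 𝒩b) (Fin 𝒩) ℂ)
    (hMb : ∀ i j, Mb i j = ∫ z in Set.Ioi (0 : ℝ), (eiA Ab (-z) * Bb * C * eiA A z) i j)
    (Γ : ℝ → Matrix (Fin 𝒩) (Fin 𝒩) ℂ)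
    (hΓ : ∀ x : ℝ, Γ x = 1 - eiA A x * M * Ab * eiA Ab (-(2 * x)) * Mb * eiA A x)
    (Γb : ℝ → Matrix (Fin 𝒩b) (Fin 𝒩b) ℂ)
    (hΓb : ∀ x : ℝ, Γb x = 1 - eiA Ab (-x) * Mb * A * eiA A (2 * x) * M * eiA Ab (-x))
    (hΓinv : ∀ x : ℝ, IsUnit (Γ x)) (hΓbinv : ∀ x : ℝ, IsUnit (Γb x))
    (g₁ g₂ : ℝ → ℂ)
    (hg₁ : ∀ z : ℝ, g₁ z
      = (Cb * eiA Ab (-z) * (Γb z)⁻¹ * eiA Ab (-z) * Mb * (A * eiA A (2 * z)) * B) 0 0)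
    (hg₂ : ∀ z : ℝ, g₂ z
      = (C * eiA A z * (Γ z)⁻¹ * eiA A z * M * (Ab * eiA Ab (-(2 * z))) * Bb) 0 0)
    (hgint : ∀ x : ℝ, IntegrableOn (fun z => g₁ z - g₂ z) (Set.Ici x))
    (G : ℝ → ℂ)
    (hG : ∀ x : ℝ, G x = ∫ z in Set.Ioi x, (g₁ z - g₂ z))
    (q r : ℝ → ℂ)
    (hq : ∀ x : ℝ, q x
      = 2 * ((Cb * eiA Ab (-x) * (Γb x)⁻¹ * eiA Ab (-x) * Bb) 0 0)
        * Complex.exp (-4 * G x))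
    (hr : ∀ x : ℝ, r x
      = 2 * ((C * eiA A x * (Γ x)⁻¹ * eiA A x * B) 0 0) * Complex.exp (4 * G x))
    (ζ : ℂ) (hζ : ζ ^ 2 ∉ spectrum ℂ Ab)
    (g₃ g₄ : ℝ → ℂ)
    (hg₃ : ∀ x : ℝ, g₃ x
      = Complex.I * ((Cb * eiA Ab (-x) * (Γb x)⁻¹ * eiA Ab (-x)
          * (Ab - ζ ^ 2 • (1 : Matrix (Fin 𝒩b) (Fin 𝒩b) ℂ))⁻¹ * Bb) 0 0))
    (hg₄ : ∀ x : ℝ, g₄ x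
      = 1 - Complex.I * ((C * eiA A x * (Γ x)⁻¹ * eiA A x * M * (Ab * eiA Ab (-(2 * x)))
          * (Ab - ζ ^ 2 • (1 : Matrix (Fin 𝒩b) (Fin 𝒩b) ℂ))⁻¹ * Bb) 0 0))
    (ψ₁ ψ₂ : ℝ → ℂ)
    (hψ₁ : ∀ x : ℝ, ψ₁ x
      = ζ * Complex.exp (Complex.I * ζ ^ 2 * x) * g₃ x * Complex.exp (-2 * G x))
    (hψ₂ : ∀ x : ℝ, ψ₂ x
      = Complex.exp (Complex.I * ζ ^ 2 * x) * g₄ x * Complex.exp (2 * G x)) :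
    ∀ x : ℝ,
      HasDerivAt ψ₁ (-Complex.I * ζ ^ 2 * ψ₁ x + ζ * q x * ψ₂ x) x ∧
      HasDerivAt ψ₂ (ζ * r x * ψ₁ x + Complex.I * ζ ^ 2 * ψ₂ x) x := by
  have hI : Complex.I * Complex.I = -1 := Complex.I_mul_I
  have hsM : A * M = M * Ab + Complex.I • (B * Cb) := by
    have h := sylvester (Complex.I • A)
      (spec_I A _ Complex.I_ne_zero (fun μ hμ => by simpa using hA μ hμ))
      ((-Complex.I) • Ab) (spec_I Ab _ (by simp) (fun μ hμ => by simpa using hAb μ hμ))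
      (B * Cb) M (by
        intro i j
        rw [hM i j]
        congr 1
        funext z
        unfold eiA
        rw [smul_smul, smul_smul, ← Matrix.mul_assoc]
        rw [mul_comm (z:ℂ) Complex.I, show (z:ℂ) * -Complex.I = Complex.I * ((-z : ℝ) : ℂ) by
          push_cast; ring])
    simp only [Matrix.mul_smul, Matrix.smul_mul] at h
    have h' := congrArg (fun T => Complex.I • T) h
    simp only [smul_add, smul_smul, hI, mul_neg, neg_neg, smul_neg] at h'
    linear_combination (norm := module) -h'
  have hsMb : Ab * Mb = Mb * A + (-Complex.I) • (Bb * C) := by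
    have h := sylvester ((-Complex.I) • Ab) (spec_I Ab _ (by simp) (fun μ hμ => by simpa using hAb μ hμ))
      (Complex.I • A)
      (spec_I A _ Complex.I_ne_zero (fun μ hμ => by simpa using hA μ hμ))
      (Bb * C) Mb (by
        intro i j
        rw [hMb i j]
        congr 1
        funext z
        unfold eiA
        rw [smul_smul, smul_smul, ← Matrix.mul_assoc]
        rw [mul_comm (z:ℂ) Complex.I, show (z:ℂ) * -Complex.I = Complex.I * ((-z : ℝ) : ℂ) by
          push_cast; ring])
    simp only [Matrix.mul_smul, Matrix.smul_mul] at h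
    have h' := congrArg (fun T => Complex.I • T) h
    simp only [smul_add, smul_smul, hI, mul_neg, neg_neg, smul_neg] at h'
    linear_combination (norm := module) h'
  have n2 : ∀ t : ℝ, -(2 * t) = (-2) * t := fun t => by ring
  let E : ℝ → Matrix (Fin 𝒩) (Fin 𝒩) ℂ := fun t => eiA A (-2 * t)
  let K : ℝ → Matrix (Fin 𝒩) (Fin 𝒩) ℂ := fun t => A * eiA A (2 * t)
  let F : ℝ → Matrix (Fin 𝒩b) (Fin 𝒩b) ℂ := fun t => eiA Ab (2 * t)
  let D : ℝ → Matrix (Fin 𝒩b) (Fin 𝒩b) ℂ := fun t => Ab * eiA Ab (-2 * t)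
  let P : ℝ → Matrix (Fin 𝒩) (Fin 𝒩) ℂ := fun t => eiA A t * (Γ t)⁻¹ * eiA A t
  let Q : ℝ → Matrix (Fin 𝒩b) (Fin 𝒩b) ℂ := fun t => eiA Ab (-t) * (Γb t)⁻¹ * eiA Ab (-t)
  set R := (Ab - ζ ^ 2 • (1 : Matrix (Fin 𝒩b) (Fin 𝒩b) ℂ))⁻¹ with hRdef
  have hWP : ∀ t, (E t - M * D t * Mb) * P t = 1 := by
    intro t
    have h := Pinv (e := eiA A t) (e' := eiA A (-t)) (Γ := Γ t) (D := D t) (M := M) (Mb := Mb)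
      (by rw [← eiA_add, neg_add_cancel, eiA_zero])
      (by rw [hΓ t, n2]; simp only [D, Matrix.mul_assoc]) (hΓinv t)
    rw [← eiA_add, show -t + -t = -2 * t by ring] at h
    exact h
  have hVQ : ∀ t, (F t - Mb * K t * M) * Q t = 1 := by
    intro t
    have h := Pinv (e := eiA Ab (-t)) (e' := eiA Ab t) (Γ := Γb t) (D := K t) (M := Mb) (Mb := M)
      (by rw [← eiA_add, add_neg_cancel, eiA_zero])
      (by rw [hΓb t]; simp only [K, Matrix.mul_assoc]) (hΓbinv t)
    rw [← eiA_add, show t + t = 2 * t by ring] at h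
    exact h
  have hPW : ∀ t, P t * (E t - M * D t * Mb) = 1 := fun t => mul_eq_one_comm.1 (hWP t)
  have hQV : ∀ t, Q t * (F t - Mb * K t * M) = 1 := fun t => mul_eq_one_comm.1 (hVQ t)
  have hP : ∀ t, P t * E t = 1 + P t * M * D t * Mb := fun t => by
    have := hPW t
    rw [Matrix.mul_sub, sub_eq_iff_eq_add] at this
    rw [this]; simp only [Matrix.mul_assoc]
  have hP' : ∀ t, E t * P t = 1 + M * D t * Mb * P t := fun t => by
    have := hWP t
    rw [Matrix.sub_mul, sub_eq_iff_eq_add] at this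
    rw [this]
  have hQ' : ∀ t, Q t * F t = 1 + Q t * Mb * K t * M := fun t => by
    have := hQV t
    rw [Matrix.mul_sub, sub_eq_iff_eq_add] at this
    rw [this]; simp only [Matrix.mul_assoc]
  have hQ : ∀ t, F t * Q t = 1 + Mb * K t * M * Q t := fun t => by
    have := hVQ t
    rw [Matrix.sub_mul, sub_eq_iff_eq_add] at this
    rw [this]
  have hEK : ∀ t, E t * K t = A := fun t => by
    simp only [E, K]
    rw [eiA_comm, ← Matrix.mul_assoc, ← eiA_add, show -2 * t + 2 * t = 0 by ring, eiA_zero,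
      Matrix.one_mul]
  have hKE : ∀ t, K t * E t = A := fun t => by
    simp only [E, K]
    rw [Matrix.mul_assoc, ← eiA_add, show 2 * t + -2 * t = 0 by ring, eiA_zero,
      Matrix.mul_one]
  have hFD : ∀ t, F t * D t = Ab := fun t => by
    simp only [F, D]
    rw [eiA_comm, ← Matrix.mul_assoc, ← eiA_add, show 2 * t + -2 * t = 0 by ring, eiA_zero,
      Matrix.one_mul]
  have hDF : ∀ t, D t * F t = Ab := fun t => by
    simp only [F, D]
    rw [Matrix.mul_assoc, ← eiA_add, show -2 * t + 2 * t = 0 by ring, eiA_zero,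
      Matrix.mul_one]
  have hKA : ∀ t, A * K t = K t * A := fun t => by
    simp only [K]
    rw [Matrix.mul_assoc, eiA_comm]
  have hFA : ∀ t, F t * Ab = Ab * F t := fun t => (eiA_comm Ab _).symm
  have hR : Ab * R = 1 + ζ ^ 2 • R := by
    have hu : IsUnit (Ab - ζ ^ 2 • (1 : Matrix (Fin 𝒩b) (Fin 𝒩b) ℂ)) := by
      have h := spectrum.notMem_iff.1 hζ
      rw [Algebra.algebraMap_eq_smul_one] at h
      have := h.neg
      rwa [neg_sub] at this
    have h2 := Matrix.mul_nonsing_inv _ ((Matrix.isUnit_iff_isUnit_det _).1 hu)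
    rw [← hRdef, Matrix.sub_mul, sub_eq_iff_eq_add, Matrix.smul_mul, Matrix.one_mul] at h2
    exact h2
  have dE : ∀ x, MD E ((-2 * Complex.I) • (A * E x)) x := fun x => by
    have h := MD_eiA A (-2) x
    simp only [Complex.ofReal_neg, Complex.ofReal_ofNat] at h
    exact h
  have dF : ∀ x, MD F ((2 * Complex.I) • (Ab * F x)) x := fun x => by
    simpa using MD_eiA Ab 2 x
  have dD : ∀ x, MD D ((-2 * Complex.I) • (Ab * D x)) x := fun x => by
    have h := (MD_eiA Ab (-2) x).const_mul Ab
    simp only [Complex.ofReal_neg, Complex.ofReal_ofNat, Matrix.mul_smul] at h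
    exact h
  have dK : ∀ x, MD K ((2 * Complex.I) • (A * K x)) x := fun x => by
    have := (MD_eiA A 2 x).const_mul A
    simpa [Matrix.mul_smul] using this
  have dP : ∀ x, MD P (-(P x * ((-2 * Complex.I) • (A * E x)
      + (2 * Complex.I) • (M * Ab * D x * Mb)) * P x)) x := fun x => by
    have h := ((dE x).sub (((dD x).const_mul M).mul_const Mb)).inv hWP
    convert h using 5
    simp only [Matrix.mul_smul, Matrix.smul_mul, Matrix.mul_assoc]
    module
  have dQ : ∀ x, MD Q (-(Q x * ((2 * Complex.I) • (Ab * F x)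
      - (2 * Complex.I) • (Mb * A * K x * M)) * Q x)) x := fun x => by
    have h := ((dF x).sub (((dK x).const_mul Mb).mul_const M)).inv hVQ
    convert h using 5
    simp only [Matrix.mul_smul, Matrix.smul_mul, Matrix.mul_assoc]
  have eg₁ : ∀ z, g₁ z = (Cb * Q z * Mb * K z * B) 0 0 := fun z => by
    rw [hg₁ z]; simp only [Q, K, Matrix.mul_assoc]
  have eg₂ : ∀ z, g₂ z = (C * P z * M * D z * Bb) 0 0 := fun z => by
    rw [hg₂ z, n2]; simp only [P, D, Matrix.mul_assoc]
  have eg₃ : ∀ z, g₃ z = Complex.I * (Cb * Q z * R * Bb) 0 0 := fun z => by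
    rw [hg₃ z]; simp only [Q, Matrix.mul_assoc]
  have eg₄ : ∀ z, g₄ z = 1 - Complex.I * (C * P z * M * D z * R * Bb) 0 0 := fun z => by
    rw [hg₄ z, n2]; simp only [P, D, Matrix.mul_assoc]
  have eq' : ∀ z, q z = 2 * (Cb * Q z * Bb) 0 0 * Complex.exp (-4 * G z) := fun z => by
    rw [hq z]; simp only [Q, Matrix.mul_assoc]
  have er : ∀ z, r z = 2 * (C * P z * B) 0 0 * Complex.exp (4 * G z) := fun z => by
    rw [hr z]; simp only [P, Matrix.mul_assoc]
  have hcont : Continuous fun z => g₁ z - g₂ z := by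
    have c1 := MD.continuous (fun x =>
      ((((dQ x).const_mul Cb).mul_const Mb).mul (dK x)).mul_const B) 0 0
    have c2 := MD.continuous (fun x =>
      ((((dP x).const_mul C).mul_const M).mul (dD x)).mul_const Bb) 0 0
    have : (fun z => g₁ z - g₂ z) = fun z => (Cb * Q z * Mb * K z * B) 0 0
        - (C * P z * M * D z * Bb) 0 0 := by
      funext z; rw [eg₁, eg₂]
    rw [this]
    exact c1.sub c2
  intro x
  have dG := G_deriv hcont hgint hG x
  have hgd : g₁ x - g₂ x = Complex.I * (C * P x * B) 0 0 * (Cb * Q x * Bb) 0 0 := by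
    rw [eg₁, eg₂]
    exact gdiff hsM hsMb (hEK x) (hDF x) (hP x) (hKA x) (hFA x) (hQ x) (hQ' x)
  rw [hgd] at dG
  have dX : HasDerivAt (fun t => (Cb * Q t * R * Bb) 0 0) _ x :=
    ((((dQ x).const_mul Cb).mul_const R).mul_const Bb) 0 0
  rw [Xderiv hsM hsMb (hEK x) (hDF x) (hP x) (hKA x) (hFA x) (hQ x) (hQ' x) hR] at dX
  have dY : HasDerivAt (fun t => (C * P t * M * D t * R * Bb) 0 0)
      (-2 * (C * P x * B) 0 0 * ((Cb * Q x * Bb) 0 0 + ζ ^ 2 * (Cb * Q x * R * Bb) 0 0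
       - Complex.I * (Cb * Q x * Bb) 0 0 * (C * P x * M * D x * R * Bb) 0 0)) x := by
    have h := (((((dP x).mul ((dD x).const_mul M)).const_mul C).mul_const R).mul_const Bb) 0 0
    rw [Yderiv hsM hsMb (hFD x) (hKE x) (hP' x) (hQ' x) hR] at h
    simpa only [Matrix.mul_assoc] using h
  simp only [Matrix.mul_assoc] at dX dY dG eg₃ eg₄ eq' er
  have dexp : HasDerivAt (fun t : ℝ => Complex.exp (Complex.I * ζ ^ 2 * t))
      (Complex.exp (Complex.I * ζ ^ 2 * x) * (Complex.I * ζ ^ 2)) x := by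
    have h := ((hasDerivAt_id (x:ℂ)).const_mul (Complex.I * ζ ^ 2)).cexp.comp_ofReal
    simpa using h
  have dm : HasDerivAt (fun t => Complex.exp (-2 * G t)) _ x := (dG.const_mul (-2)).cexp
  have dp : HasDerivAt (fun t => Complex.exp (2 * G t)) _ x := (dG.const_mul 2).cexp
  have f1 : ψ₁ = fun t : ℝ => ζ * Complex.exp (Complex.I * ζ ^ 2 * t)
      * (Complex.I * (Cb * (Q t * (R * Bb))) 0 0) * Complex.exp (-2 * G t) := by
    funext t; rw [hψ₁, eg₃]
  have f2 : ψ₂ = fun t : ℝ => Complex.exp (Complex.I * ζ ^ 2 * t)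
      * (1 - Complex.I * (C * (P t * (M * (D t * (R * Bb))))) 0 0) * Complex.exp (2 * G t) := by
    funext t; rw [hψ₂, eg₄]
  have x4 : Complex.exp (-4 * G x) * Complex.exp (2 * G x) = Complex.exp (-2 * G x) := by
    rw [← Complex.exp_add]; ring_nf
  have x4' : Complex.exp (4 * G x) * Complex.exp (-2 * G x) = Complex.exp (2 * G x) := by
    rw [← Complex.exp_add]; ring_nf
  constructor
  · rw [f1, f2, eq']
    have h := (((dexp.const_mul ζ).mul (dX.const_mul Complex.I)).mul dm)
    refine h.congr_deriv ?_
    simp only [Pi.mul_apply]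
    generalize (Cb * (Q x * (R * Bb))) 0 0 = X
    generalize (C * (P x * (M * (D x * (R * Bb))))) 0 0 = Y
    generalize (Cb * (Q x * Bb)) 0 0 = q0
    generalize (C * (P x * B)) 0 0 = p0
    linear_combination (-2 * ζ * Complex.exp (Complex.I * ζ ^ 2 * x) * (1 - Complex.I * Y) * q0) * x4
      + (-2 * ζ * Complex.exp (Complex.I * ζ ^ 2 * x) * Complex.exp (-2 * G x) * q0) * hI
  · rw [f1, f2, er]
    have h := ((dexp.mul ((dY.const_mul Complex.I).const_sub 1)).mul dp)
    refine h.congr_deriv ?_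
    simp only [Pi.mul_apply]
    generalize (Cb * (Q x * (R * Bb))) 0 0 = X
    generalize (C * (P x * (M * (D x * (R * Bb))))) 0 0 = Y
    generalize (Cb * (Q x * Bb)) 0 0 = q0
    generalize (C * (P x * B)) 0 0 = p0
    linear_combination
      (-2 * ζ ^ 2 * p0 * Complex.exp (Complex.I * ζ ^ 2 * x) * Complex.I * X) * x4'
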